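/- (Proinov-type transference) Let d ∈ ℕ and let S_d = (y_k)_{k≥0}, y_k = (y_{1,k},…,y_{d,k}), be an arbitrary sequence in [0,1)^d. Then for every N ∈ ℕ there exists n ∈ {1,2,…,N} such that n·‖D_{S_d}^n | 𝒟_0^d‖ + 1 ≥ N·‖D_{P_{N,d+1}} | 𝒟_0^{d+1}‖, where P_{N,d+1} is the finite point set in [0,1)^{d+1} consisting of the N points x_k = (y_{1,k},…,y_{d,k}, k/N) for k = 0,1,…,N−1. -/

import Mathlib

open MeasureTheory
open scoped ENNReal

noncomputable section

/-- The closed unit cube `[0,1]^d`. -/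
def unitCube (d : ℕ) : Set (Fin d → ℝ) := Set.univ.pi fun _ => Set.Icc (0:ℝ) 1

/-- The half-open unit cube `[0,1)^d`. -/
def unitCubeIco (d : ℕ) : Set (Fin d → ℝ) := Set.univ.pi fun _ => Set.Ico (0:ℝ) 1

/-- Discrepancy function of the first `N` points of the sequence `S` in `[0,1)^d`. -/
def discSeq (d : ℕ) (S : ℕ → Fin d → ℝ) (N : ℕ) (x : Fin d → ℝ) : ℝ :=
  (Nat.card {k : Fin N // ∀ i, S k i < x i} : ℝ) / N - ∏ i, x i

/-- One-dimensional Haar function `h_{j,m}`, with `h_{-1,0} = 1_{[0,1)}`. -/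
def haar1 (j : ℤ) (m : ℕ) (x : ℝ) : ℝ :=
  if j = -1 then (if 0 ≤ x ∧ x < 1 then 1 else 0)
  else if (m:ℝ)/2^j.toNat ≤ x ∧ x < ((m:ℝ) + 1/2)/2^j.toNat then 1
  else if ((m:ℝ) + 1/2)/2^j.toNat ≤ x ∧ x < ((m:ℝ)+1)/2^j.toNat then -1
  else 0

/-- `d`-dimensional (tensor product) Haar function. -/
def haarFn (d : ℕ) (j : Fin d → ℤ) (m : Fin d → ℕ) (x : Fin d → ℝ) : ℝ :=
  ∏ i, haar1 (j i) (m i) (x i)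

/-- Haar coefficient `⟨f, h_{j,m}⟩`. -/
def haarCoeff (d : ℕ) (f : (Fin d → ℝ) → ℝ) (j : Fin d → ℤ) (m : Fin d → ℕ) : ℝ :=
  ∫ x in unitCube d, f x * haarFn d j m x

/-- `|j| = max(j₁,0) + ⋯ + max(j_d,0)`. -/
def jnorm (d : ℕ) (j : Fin d → ℤ) : ℕ := ∑ i, (j i).toNat

/-- One-dimensional dyadic interval `I_{j,m}`. -/
def dyadicI (j : ℤ) (m : ℕ) : Set ℝ :=
  Set.Ico ((m:ℝ)/2^j.toNat) (((m:ℝ)+1)/2^j.toNat)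

/-- `d`-dimensional dyadic box `I_{j,m}`. -/
def dyadicBox (d : ℕ) (j : Fin d → ℤ) (m : Fin d → ℕ) : Set (Fin d → ℝ) :=
  Set.univ.pi fun i => dyadicI (j i) (m i)

/-- The index set `𝔻_j` as a finset. -/
def Dfin (d : ℕ) (j : Fin d → ℤ) : Finset (Fin d → ℕ) :=
  Fintype.piFinset fun i => Finset.range (2 ^ (j i).toNat)

/-- The index set `𝔻_j` for `j ∈ ℕ₀^d`. -/
def Dfin0 (d : ℕ) (j : Fin d → ℕ) : Finset (Fin d → ℕ) :=
  Fintype.piFinset fun i => Finset.range (2 ^ (j i))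

/-- Coordinate of the `k`-th point of a digital sequence over `𝔽₂` with generating
matrix `C` (`0`-based rows and columns). -/
def digitalCoord (C : ℕ → ℕ → ZMod 2) (k : ℕ) : ℝ :=
  ∑' i : ℕ,
    (((∑ ℓ ∈ Finset.range (k+1), C i ℓ * (if k.testBit ℓ then 1 else 0)).val : ℕ) : ℝ) / 2 ^ (i + 1)

/-- The digital sequence over `𝔽₂` generated by matrices `C 0, …, C (d-1)`. -/
def digitalSeq (d : ℕ) (C : Fin d → ℕ → ℕ → ZMod 2) : ℕ → Fin d → ℝ :=
  fun k j => digitalCoord (C j) k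

/-- `C 0, …, C (d-1)` generate an order `α` digital `(t,n,d)`-net over `𝔽₂`,
where the relevant submatrices have `q` rows (`q ≥ αn`) and `n` columns.
Row indices are `0`-based; the `1`-based row value of row `r` is `r+1`. -/
def IsOrderNet (α n t q d : ℕ) (C : Fin d → ℕ → ℕ → ZMod 2) : Prop :=
  ∀ (ν : Fin d → ℕ) (r : ∀ j : Fin d, Fin (ν j) → ℕ),
    (∀ j, StrictAnti (r j)) →
    (∀ j l, r j l < q) →
    (∑ j, ∑ l ∈ Finset.univ.filter (fun l : Fin (ν j) => (l:ℕ) < α), (r j l + 1)) ≤ α * n - t →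
    LinearIndependent (ZMod 2)
      (fun p : Σ j : Fin d, Fin (ν j) => fun col : Fin n => C p.1 (r p.1 p.2) col)

/-- `C 0, …, C (d-1)` generate an order `α` digital `(t,d)`-sequence over `𝔽₂`. -/
def IsOrderSeq (α t d : ℕ) (C : Fin d → ℕ → ℕ → ZMod 2) : Prop :=
  ∀ n : ℕ, t < α * n → IsOrderNet α n t (α * n) d C

/-- The condition `e_{i,k,ℓ} = 0` for all `k > 2ℓ` (in `1`-based indexing). -/
def Triangular2 (d : ℕ) (E : Fin d → ℕ → ℕ → ZMod 2) : Prop :=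
  ∀ i k ℓ, 2 * (ℓ + 1) < k + 1 → E i k ℓ = 0

open scoped Classical in
/-- The quantity `λ(U)⁻¹ ∑_{j ∈ ℕ₀^d} 2^{|j|} ∑_{m : I_{j,m} ⊆ U} ⟨f,h_{j,m}⟩²`. -/
def bmoSq (d : ℕ) (f : (Fin d → ℝ) → ℝ) (U : Set (Fin d → ℝ)) : ℝ≥0∞ :=
  (volume U)⁻¹ * ∑' j : Fin d → ℕ, ∑ m ∈ Dfin0 d j,
    if dyadicBox d (fun i => (j i : ℤ)) m ⊆ U then
      (2:ℝ≥0∞) ^ (∑ i, j i) * ENNReal.ofReal ((haarCoeff d f (fun i => (j i : ℤ)) m)^2)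
    else 0

/-- The BMO (semi-)norm `‖f | bmo^d‖`. -/
def bmoNorm (d : ℕ) (f : (Fin d → ℝ) → ℝ) : ℝ≥0∞ :=
  (⨆ U : {U : Set (Fin d → ℝ) // MeasurableSet U ∧ U ⊆ unitCubeIco d ∧ 0 < volume U},
    bmoSq d f U.1) ^ (1/2 : ℝ)

/-- The Orlicz norm of `f` on `[0,1)^d` with respect to the Young function `ψ`,
with the convention `inf ∅ = ∞`. -/
def orliczNorm (d : ℕ) (ψ : ℝ → ℝ) (f : (Fin d → ℝ) → ℝ) : ℝ≥0∞ :=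
  ⨅ K : {K : ℝ // 0 < K ∧ ∫ x in unitCubeIco d, ψ (|f x| / K) ≤ 1}, ENNReal.ofReal K.1

/-- `ψ` is a Young function which coincides with `exp(x^β) - 1` for all large `x`. -/
def IsYoungExp (β : ℝ) (ψ : ℝ → ℝ) : Prop :=
  ConvexOn ℝ (Set.Ici 0) ψ ∧ ψ 0 = 0 ∧ (∀ x : ℝ, 0 < x → 0 < ψ x) ∧
    ∃ x₀ : ℝ, ∀ x ≥ x₀, ψ x = Real.exp (x ^ β) - 1

/-- The set of valid Haar indices `j ∈ ℕ_{-1}^d`. -/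
def validJ (d : ℕ) : Set (Fin d → ℤ) := {j | ∀ i, -1 ≤ j i}

/-- The `q`-th power of the Haar-characterization of the `S^s_{p,q}B` norm:
`∑_{j ∈ ℕ_{-1}^d} 2^{|j|(s-1/p+1)q} (∑_{m ∈ 𝔻_j} |⟨f,h_{j,m}⟩|^p)^{q/p}`. -/
def besovSum (d : ℕ) (p q s : ℝ) (f : (Fin d → ℝ) → ℝ) : ℝ≥0∞ :=
  ∑' j : validJ d,
    ENNReal.ofReal ((2:ℝ) ^ ((jnorm d j.1 : ℝ) * (s - 1/p + 1) * q) *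
      (∑ m ∈ Dfin d j.1, |haarCoeff d f j.1 m| ^ p) ^ (q / p))

/-- Coordinate of the `k`-th point of a digital net with `q × n` generating matrix `C`. -/
def netCoord (q n : ℕ) (C : ℕ → ℕ → ZMod 2) (k : ℕ) : ℝ :=
  ∑ i ∈ Finset.range q,
    ((∑ ℓ ∈ Finset.range n, C i ℓ * (if k.testBit ℓ then 1 else 0)).val : ℝ) / 2 ^ (i + 1)

/-- `n_{μ+1}`, with the convention `n_{r+1} = log₂ N` (indices `1`-based, `n` stored `0`-based). -/
def nExt (r : ℕ) (n : Fin r → ℕ) (N : ℕ) (μ : ℕ) : ℝ :=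
  if h : μ < r then (n ⟨μ, h⟩ : ℝ) else Real.logb 2 N

/-- `n_μ`, with the convention `n_0 = 0` (indices `1`-based, `n` stored `0`-based). -/
def nPrev (r : ℕ) (n : Fin r → ℕ) (μ : ℕ) : ℝ :=
  if h : 1 ≤ μ ∧ μ ≤ r then (n ⟨μ - 1, by omega⟩ : ℝ) else 0

/-- The dyadic square function `Sf`, valued in `ℝ≥0∞`. -/
def sqFnE (d : ℕ) (f : (Fin d → ℝ) → ℝ) (x : Fin d → ℝ) : ℝ≥0∞ :=
  (∑' j : validJ d, ∑ m ∈ Dfin d j.1,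
    ENNReal.ofReal ((2:ℝ) ^ (2 * jnorm d j.1) * (haarCoeff d f j.1 m)^2 *
      (dyadicBox d j.1 m).indicator (fun _ => (1:ℝ)) x)) ^ (1/2 : ℝ)

/-- `sup_{p > 1} p^{-1/β} ‖f‖_{L_p([0,1]^d)}`. -/
def supLp (d : ℕ) (β : ℝ) (f : (Fin d → ℝ) → ℝ) : ℝ≥0∞ :=
  ⨆ p : {p : ℝ // 1 < p},
    ENNReal.ofReal ((p:ℝ) ^ (-(1/β))) * eLpNorm f (ENNReal.ofReal (p:ℝ)) (volume.restrict (unitCube d))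

/-- `‖f | 𝒟₀^d‖² = ∑_{j ∈ ℕ₀^d} 2^{|j|} ∑_{m ∈ 𝔻_j} ⟨f,h_{j,m}⟩²`. -/
def dNormSq (d : ℕ) (f : (Fin d → ℝ) → ℝ) : ℝ≥0∞ :=
  ∑' j : Fin d → ℕ, ∑ m ∈ Dfin0 d j,
    ENNReal.ofReal ((2:ℝ) ^ (∑ i, j i) * (haarCoeff d f (fun i => (j i : ℤ)) m)^2)

/-- `‖f | 𝒟₀^d‖`. -/
def dNorm (d : ℕ) (f : (Fin d → ℝ) → ℝ) : ℝ≥0∞ := (dNormSq d f) ^ (1/2 : ℝ)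

/-!
Fix `N`. For `t ∈ [0,1]`, the points `(y_k, k/N)` with last coordinate below `t` are those with
`k < n`, where `n = ⌈N t⌉`, so that
`N D_{P_{N,d+1}}(x, t) = n D_S^n(x) + (n - N t) x₁⋯x_d` with `0 ≤ n - N t ≤ 1`.
By Bessel's inequality `‖x₁⋯x_d | 𝒟₀^d‖ ≤ ‖x₁⋯x_d‖_{L₂} ≤ 1`, hence the triangle inequality bounds
`‖N D_{P_{N,d+1}}(·, t) | 𝒟₀^d‖` by `n ‖D_S^n | 𝒟₀^d‖ + 1`, uniformly in `t` by the maximum over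
`n ≤ N`. Bessel's inequality for the Haar system in the last variable alone gives
`‖f | 𝒟₀^{d+1}‖² ≤ ∫₀¹ ‖f(·, t) | 𝒟₀^d‖² dt`, and the claim follows by integrating over `t`.
-/

lemma sum_range_two_mul {M : Type*} [AddCommMonoid M] (f : ℕ → M) (n : ℕ) :
    ∑ m ∈ Finset.range (2 * n), f m = ∑ m ∈ Finset.range n, (f (2 * m) + f (2 * m + 1)) := by
  induction n with
  | zero => rfl
  | succ n ih =>
    rw [Nat.mul_succ, Finset.sum_range_succ, Finset.sum_range_succ, Finset.sum_range_succ, ih,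
      add_assoc]

lemma sum_range_two_pow_eq {M : Type*} [AddCommMonoid M] {a : ℕ → ℕ → M}
    (ha : ∀ j m, a j m = a (j + 1) (2 * m) + a (j + 1) (2 * m + 1)) (J : ℕ) :
    ∑ m ∈ Finset.range (2 ^ J), a J m = a 0 0 := by
  induction J with
  | zero => simp
  | succ J ih => simp_rw [pow_succ', sum_range_two_mul, ← ha, ih]

section InnerProductSpace

variable {E : Type*} [NormedAddCommGroup E] [InnerProductSpace ℝ E]

lemma parallelogram_law_with_enorm (x y : E) :
    ‖x + y‖ₑ ^ 2 + ‖x - y‖ₑ ^ 2 = 2 * (‖x‖ₑ ^ 2 + ‖y‖ₑ ^ 2) := by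
  simp only [enorm_eq_nnnorm]
  exact_mod_cast parallelogram_law_with_nnnorm ℝ x y

lemma sum_sq_haar_differences_le {a : ℕ → ℕ → E}
    (ha : ∀ j m, a j m = a (j + 1) (2 * m) + a (j + 1) (2 * m + 1)) (J : ℕ) :
    ∑ j ∈ Finset.range J, ∑ m ∈ Finset.range (2 ^ j),
        2 ^ j * ‖a (j + 1) (2 * m) - a (j + 1) (2 * m + 1)‖ₑ ^ 2 ≤
      ∑ m ∈ Finset.range (2 ^ J), 2 ^ J * ‖a J m‖ₑ ^ 2 := by
  induction J with
  | zero => simp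
  | succ J ih =>
    rw [Finset.sum_range_succ, pow_succ' 2 J, sum_range_two_mul]
    refine (add_le_add_left ih _).trans_eq ?_
    rw [← Finset.sum_add_distrib]
    refine Finset.sum_congr rfl fun m _ => ?_
    rw [ha J m, ← mul_add, parallelogram_law_with_enorm]
    ring

end InnerProductSpace

lemma enorm_integral_sq_le {α E : Type*} [MeasurableSpace α] [NormedAddCommGroup E]
    [NormedSpace ℝ E] {μ : Measure α} {f : α → E} (hf : AEStronglyMeasurable f μ) :
    ‖∫ x, f x ∂μ‖ₑ ^ 2 ≤ μ Set.univ * ∫⁻ x, ‖f x‖ₑ ^ 2 ∂μ := by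
  have holder := ENNReal.lintegral_mul_le_Lp_mul_Lq μ Real.HolderConjugate.two_two
    (aemeasurable_const (b := (1 : ℝ≥0∞))) hf.enorm
  calc ‖∫ x, f x ∂μ‖ₑ ^ 2 ≤ (∫⁻ x, ‖f x‖ₑ ∂μ) ^ 2 := by
        gcongr; exact enorm_integral_le_lintegral_enorm f
    _ ≤ (μ Set.univ ^ (1 / 2 : ℝ) * (∫⁻ x, ‖f x‖ₑ ^ 2 ∂μ) ^ (1 / 2 : ℝ)) ^ 2 := by
        gcongr; simpa using holder
    _ = μ Set.univ * ∫⁻ x, ‖f x‖ₑ ^ 2 ∂μ := by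
        rw [mul_pow, ← ENNReal.rpow_mul_natCast, ← ENNReal.rpow_mul_natCast]; norm_num

section DyadicInterval

lemma measurableSet_dyadicI (j : ℤ) (m : ℕ) : MeasurableSet (dyadicI j m) := measurableSet_Ico

lemma volume_dyadicI (j : ℤ) (m : ℕ) : volume (dyadicI j m) = (2 ^ j.toNat)⁻¹ := by
  have hlen : ((m : ℝ) + 1) / 2 ^ j.toNat - m / 2 ^ j.toNat = (2 ^ j.toNat)⁻¹ := by ring
  rw [dyadicI, Real.volume_Ico, hlen, ENNReal.ofReal_inv_of_pos (by positivity),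
    ENNReal.ofReal_pow zero_le_two, ENNReal.ofReal_ofNat]

lemma dyadicI_succ_two_mul (j m : ℕ) :
    dyadicI (j + 1 : ℕ) (2 * m) = Set.Ico ((m : ℝ) / 2 ^ j) ((m + 1 / 2) / 2 ^ j) := by
  simp only [dyadicI, Int.toNat_natCast, pow_succ]
  congr 1 <;> (push_cast; field_simp)

lemma dyadicI_succ_two_mul_add_one (j m : ℕ) :
    dyadicI (j + 1 : ℕ) (2 * m + 1) =
      Set.Ico ((m + 1 / 2 : ℝ) / 2 ^ j) ((m + 1) / 2 ^ j) := by
  simp only [dyadicI, Int.toNat_natCast, pow_succ]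
  congr 1 <;> (push_cast; field_simp)
  ring

lemma disjoint_dyadicI_succ (j m : ℕ) :
    Disjoint (dyadicI (j + 1 : ℕ) (2 * m)) (dyadicI (j + 1 : ℕ) (2 * m + 1)) := by
  rw [dyadicI_succ_two_mul, dyadicI_succ_two_mul_add_one]
  exact Set.Ico_disjoint_Ico_same

lemma dyadicI_eq_union (j m : ℕ) :
    dyadicI j m = dyadicI (j + 1 : ℕ) (2 * m) ∪ dyadicI (j + 1 : ℕ) (2 * m + 1) := by
  rw [dyadicI_succ_two_mul, dyadicI_succ_two_mul_add_one,
    Set.Ico_union_Ico_eq_Ico (by gcongr; norm_num) (by gcongr; norm_num), dyadicI,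
    Int.toNat_natCast]

lemma haar1_eq_indicator_sub (j m : ℕ) (t : ℝ) :
    haar1 j m t = (dyadicI (j + 1 : ℕ) (2 * m)).indicator 1 t -
      (dyadicI (j + 1 : ℕ) (2 * m + 1)).indicator 1 t := by
  have hj : (j : ℤ) ≠ -1 := by omega
  have hdisj : t ∈ dyadicI (j + 1 : ℕ) (2 * m) → t ∉ dyadicI (j + 1 : ℕ) (2 * m + 1) :=
    fun ht => Set.disjoint_left.mp (disjoint_dyadicI_succ j m) ht
  rw [dyadicI_succ_two_mul, dyadicI_succ_two_mul_add_one] at *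
  simp only [haar1, hj, if_false, Int.toNat_natCast, ← Set.mem_Ico, Set.indicator_apply,
    Pi.one_apply]
  split_ifs with hl hr hr
  · exact absurd hr (hdisj hl)
  all_goals norm_num

variable {μ : Measure ℝ} {g : ℝ → ℝ}

lemma integral_mul_haar1 (hg : Integrable g μ) (j m : ℕ) :
    ∫ t, g t * haar1 j m t ∂μ =
      ∫ t in dyadicI (j + 1 : ℕ) (2 * m), g t ∂μ -
        ∫ t in dyadicI (j + 1 : ℕ) (2 * m + 1), g t ∂μ := by
  have hmeas := measurableSet_dyadicI (j + 1 : ℕ)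
  rw [← integral_indicator (hmeas _), ← integral_indicator (hmeas _),
    ← integral_sub (hg.indicator (hmeas _)) (hg.indicator (hmeas _))]
  simp only [haar1_eq_indicator_sub, mul_sub, ← Set.indicator_mul_right, Pi.one_apply, mul_one]

lemma setIntegral_dyadicI_eq_add (hg : Integrable g μ) (j m : ℕ) :
    ∫ t in dyadicI j m, g t ∂μ =
      ∫ t in dyadicI (j + 1 : ℕ) (2 * m), g t ∂μ +
        ∫ t in dyadicI (j + 1 : ℕ) (2 * m + 1), g t ∂μ := by
  rw [dyadicI_eq_union, setIntegral_union (disjoint_dyadicI_succ j m) (measurableSet_dyadicI _ _)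
    hg.integrableOn hg.integrableOn]

lemma setLIntegral_dyadicI_eq_add (f : ℝ → ℝ≥0∞) (j m : ℕ) :
    ∫⁻ t in dyadicI j m, f t ∂μ =
      ∫⁻ t in dyadicI (j + 1 : ℕ) (2 * m), f t ∂μ +
        ∫⁻ t in dyadicI (j + 1 : ℕ) (2 * m + 1), f t ∂μ := by
  rw [dyadicI_eq_union, lintegral_union (measurableSet_dyadicI _ _) (disjoint_dyadicI_succ j m)]

lemma two_pow_mul_enorm_setIntegral_dyadicI_sq_le (hμ : μ ≤ volume)
    (hg : AEStronglyMeasurable g μ) (j m : ℕ) :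
    2 ^ j * ‖∫ t in dyadicI j m, g t ∂μ‖ₑ ^ 2 ≤ ∫⁻ t in dyadicI j m, ‖g t‖ₑ ^ 2 ∂μ := by
  have hvol : μ (dyadicI j m) ≤ (2 ^ j)⁻¹ :=
    (hμ _).trans_eq (by rw [volume_dyadicI, Int.toNat_natCast])
  calc 2 ^ j * ‖∫ t in dyadicI j m, g t ∂μ‖ₑ ^ 2
      ≤ 2 ^ j * ((2 ^ j)⁻¹ * ∫⁻ t in dyadicI j m, ‖g t‖ₑ ^ 2 ∂μ) := by
        gcongr
        refine (enorm_integral_sq_le hg.restrict).trans ?_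
        rw [Measure.restrict_apply_univ]
        gcongr
    _ = ∫⁻ t in dyadicI j m, ‖g t‖ₑ ^ 2 ∂μ :=
        ENNReal.mul_inv_cancel_left (by simp) (by simp)

theorem tsum_enorm_integral_mul_haar1_sq_le (hμ : μ ≤ volume) (hg : Integrable g μ) :
    ∑' j : ℕ, ∑ m ∈ Finset.range (2 ^ j), 2 ^ j * ‖∫ t, g t * haar1 j m t ∂μ‖ₑ ^ 2 ≤
      ∫⁻ t, ‖g t‖ₑ ^ 2 ∂μ := by
  rw [ENNReal.tsum_eq_iSup_nat]
  refine iSup_le fun J => ?_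
  calc ∑ j ∈ Finset.range J, ∑ m ∈ Finset.range (2 ^ j),
        2 ^ j * ‖∫ t, g t * haar1 j m t ∂μ‖ₑ ^ 2
      ≤ ∑ m ∈ Finset.range (2 ^ J), 2 ^ J * ‖∫ t in dyadicI J m, g t ∂μ‖ₑ ^ 2 := by
        simp only [integral_mul_haar1 hg]
        exact sum_sq_haar_differences_le (a := fun j m => ∫ t in dyadicI j m, g t ∂μ)
          (setIntegral_dyadicI_eq_add hg) J
    _ ≤ ∑ m ∈ Finset.range (2 ^ J), ∫⁻ t in dyadicI J m, ‖g t‖ₑ ^ 2 ∂μ :=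
        Finset.sum_le_sum fun m _ => two_pow_mul_enorm_setIntegral_dyadicI_sq_le hμ hg.1 J m
    _ = ∫⁻ t in dyadicI (0 : ℕ) 0, ‖g t‖ₑ ^ 2 ∂μ :=
        sum_range_two_pow_eq (a := fun j m => ∫⁻ t in dyadicI j m, ‖g t‖ₑ ^ 2 ∂μ)
          (setLIntegral_dyadicI_eq_add _) J
    _ ≤ ∫⁻ t, ‖g t‖ₑ ^ 2 ∂μ := setLIntegral_le_lintegral _ _

end DyadicInterval

section Cube

lemma isCompact_unitCube (d : ℕ) : IsCompact (unitCube d) :=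
  isCompact_univ_pi fun _ => isCompact_Icc

lemma volume_unitCube (d : ℕ) : volume (unitCube d) = 1 := by
  rw [unitCube, volume_pi_pi]
  simp

lemma measurable_haar1 (j : ℤ) (m : ℕ) : Measurable (haar1 j m) := by
  have hIco (a b : ℝ) : MeasurableSet {x : ℝ | a ≤ x ∧ x < b} := measurableSet_Ico
  unfold haar1
  split_ifs
  · exact measurable_const.ite (hIco _ _) measurable_const
  · exact measurable_const.ite (hIco _ _) (measurable_const.ite (hIco _ _) measurable_const)

lemma abs_haar1_le_one (j : ℤ) (m : ℕ) (x : ℝ) : |haar1 j m x| ≤ 1 := by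
  unfold haar1
  split_ifs <;> simp

variable {d : ℕ} {f g : (Fin d → ℝ) → ℝ}

lemma measurable_haarFn (j : Fin d → ℤ) (m : Fin d → ℕ) : Measurable (haarFn d j m) :=
  Finset.measurable_fun_prod _ fun i _ => (measurable_haar1 _ _).comp (measurable_pi_apply i)

lemma abs_haarFn_le_one (j : Fin d → ℤ) (m : Fin d → ℕ) (x : Fin d → ℝ) :
    |haarFn d j m x| ≤ 1 := by
  rw [haarFn, Finset.abs_prod]
  exact Finset.prod_le_one (fun _ _ => abs_nonneg _) fun _ _ => abs_haar1_le_one _ _ _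

lemma integrableOn_mul_haarFn {s : Set (Fin d → ℝ)} (hf : IntegrableOn f s) (j : Fin d → ℤ)
    (m : Fin d → ℕ) : IntegrableOn (fun x => f x * haarFn d j m x) s :=
  hf.mul_bdd (measurable_haarFn j m).aestronglyMeasurable
    (Filter.Eventually.of_forall (abs_haarFn_le_one j m))

lemma haarCoeff_add (hf : IntegrableOn f (unitCube d)) (hg : IntegrableOn g (unitCube d))
    (j : Fin d → ℤ) (m : Fin d → ℕ) :
    haarCoeff d (f + g) j m = haarCoeff d f j m + haarCoeff d g j m := by
  simp only [haarCoeff, Pi.add_apply, add_mul]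
  exact integral_add (integrableOn_mul_haarFn hf j m) (integrableOn_mul_haarFn hg j m)

lemma haarCoeff_const_smul (c : ℝ) (f : (Fin d → ℝ) → ℝ) (j : Fin d → ℤ) (m : Fin d → ℕ) :
    haarCoeff d (c • f) j m = c * haarCoeff d f j m := by
  simp only [haarCoeff, Pi.smul_apply, smul_eq_mul, mul_assoc, integral_const_mul]

lemma dNormSq_eq_tsum_enorm (d : ℕ) (f : (Fin d → ℝ) → ℝ) :
    dNormSq d f = ∑' j : Fin d → ℕ, ∑ m ∈ Dfin0 d j,
      2 ^ (∑ i, j i) * ‖haarCoeff d f (fun i => j i) m‖ₑ ^ 2 := by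
  have ofReal_sq (a : ℝ) (k : ℕ) : ENNReal.ofReal (2 ^ k * a ^ 2) = 2 ^ k * ‖a‖ₑ ^ 2 := by
    rw [ENNReal.ofReal_mul (by positivity), ENNReal.ofReal_pow zero_le_two, ENNReal.ofReal_ofNat,
      ← sq_abs, ENNReal.ofReal_pow (abs_nonneg a), Real.enorm_eq_ofReal_abs]
  simp only [dNormSq, ofReal_sq]

/-- The Haar coefficients of `f`, weighted by `2^{|j|/2}` and extended by zero to `m ∉ 𝔻_j`, so that
`‖f | 𝒟₀^d‖` is the `ℓ₂` norm of this family and inherits the triangle inequality. -/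
def haarWeighted (d : ℕ) (f : (Fin d → ℝ) → ℝ) (p : (Fin d → ℕ) × (Fin d → ℕ)) : ℝ :=
  if p.2 ∈ Dfin0 d p.1 then √(2 ^ ∑ i, p.1 i) * haarCoeff d f (fun i => p.1 i) p.2 else 0

lemma haarWeighted_add (hf : IntegrableOn f (unitCube d)) (hg : IntegrableOn g (unitCube d)) :
    haarWeighted d (f + g) = haarWeighted d f + haarWeighted d g := by
  ext p
  simp only [haarWeighted, Pi.add_apply, haarCoeff_add hf hg]
  split_ifs <;> ring

lemma haarWeighted_const_smul (c : ℝ) (f : (Fin d → ℝ) → ℝ) :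
    haarWeighted d (c • f) = c • haarWeighted d f := by
  ext p
  simp only [haarWeighted, Pi.smul_apply, smul_eq_mul, haarCoeff_const_smul]
  split_ifs <;> ring

lemma dNormSq_eq_tsum_haarWeighted (d : ℕ) (f : (Fin d → ℝ) → ℝ) :
    dNormSq d f = ∑' p, ‖haarWeighted d f p‖ₑ ^ 2 := by
  have weight_sq (k : ℕ) : ‖√(2 ^ k)‖ₑ ^ 2 = 2 ^ k := by
    rw [← enorm_pow, Real.sq_sqrt (by positivity), Real.enorm_of_nonneg (by positivity),
      ENNReal.ofReal_pow zero_le_two, ENNReal.ofReal_ofNat]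
  rw [dNormSq_eq_tsum_enorm, ENNReal.tsum_prod']
  refine tsum_congr fun j => ?_
  rw [tsum_eq_sum (s := Dfin0 d j) fun m hm => by simp [haarWeighted, hm]]
  refine Finset.sum_congr rfl fun m hm => ?_
  rw [haarWeighted, if_pos hm, enorm_mul, mul_pow, weight_sq]

lemma dNorm_eq_eLpNorm (d : ℕ) (f : (Fin d → ℝ) → ℝ) :
    dNorm d f = eLpNorm (haarWeighted d f) 2 Measure.count := by
  rw [dNorm, dNormSq_eq_tsum_haarWeighted, eLpNorm_eq_lintegral_rpow_enorm_toReal two_ne_zero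
    ENNReal.ofNat_ne_top, lintegral_count]
  simp

lemma dNorm_add_le (hf : IntegrableOn f (unitCube d)) (hg : IntegrableOn g (unitCube d)) :
    dNorm d (f + g) ≤ dNorm d f + dNorm d g := by
  simp only [dNorm_eq_eLpNorm, haarWeighted_add hf hg]
  exact eLpNorm_add_le .of_discrete .of_discrete one_le_two

lemma dNorm_const_smul (c : ℝ) (f : (Fin d → ℝ) → ℝ) : dNorm d (c • f) = ‖c‖ₑ * dNorm d f := by
  rw [dNorm_eq_eLpNorm, dNorm_eq_eLpNorm, haarWeighted_const_smul, eLpNorm_const_smul]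

lemma dNorm_smul_add_smul_le (hf : IntegrableOn f (unitCube d)) (hg : IntegrableOn g (unitCube d))
    (a b : ℝ) : dNorm d (a • f + b • g) ≤ ‖a‖ₑ * dNorm d f + ‖b‖ₑ * dNorm d g := by
  simpa only [dNorm_const_smul] using dNorm_add_le (hf.smul a) (hg.smul b)

lemma dNorm_sq (d : ℕ) (f : (Fin d → ℝ) → ℝ) : dNorm d f ^ 2 = dNormSq d f := by
  rw [dNorm, ← ENNReal.rpow_mul_natCast]
  norm_num

end Cube

section Slices

lemma coe_piFinSuccAbove_last_symm (d : ℕ) :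
    ⇑(MeasurableEquiv.piFinSuccAbove (fun _ => ℝ) (Fin.last d)).symm =
      fun p : ℝ × (Fin d → ℝ) => (Fin.snoc p.2 p.1 : Fin (d + 1) → ℝ) :=
  funext fun p => Fin.insertNth_last' p.1 p.2

lemma measurableEmbedding_snoc (d : ℕ) :
    MeasurableEmbedding fun p : ℝ × (Fin d → ℝ) => (Fin.snoc p.2 p.1 : Fin (d + 1) → ℝ) := by
  rw [← coe_piFinSuccAbove_last_symm]
  exact MeasurableEquiv.measurableEmbedding _

lemma snoc_mem_unitCube {d : ℕ} (x : Fin d → ℝ) (t : ℝ) :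
    (Fin.snoc x t : Fin (d + 1) → ℝ) ∈ unitCube (d + 1) ↔
      t ∈ Set.Icc (0 : ℝ) 1 ∧ x ∈ unitCube d := by
  simp only [unitCube, Set.mem_univ_pi, Fin.forall_fin_succ', Fin.snoc_castSucc, Fin.snoc_last,
    and_comm]

lemma measurePreserving_snoc_unitCube (d : ℕ) :
    MeasurePreserving (fun p : ℝ × (Fin d → ℝ) => (Fin.snoc p.2 p.1 : Fin (d + 1) → ℝ))
      ((volume.restrict (Set.Icc 0 1)).prod (volume.restrict (unitCube d)))
      (volume.restrict (unitCube (d + 1))) := by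
  have hvol : MeasurePreserving
      (fun p : ℝ × (Fin d → ℝ) => (Fin.snoc p.2 p.1 : Fin (d + 1) → ℝ)) volume volume := by
    rw [← coe_piFinSuccAbove_last_symm]
    exact (volume_preserving_piFinSuccAbove (fun _ => ℝ) (Fin.last d)).symm
  have hpre : (fun p : ℝ × (Fin d → ℝ) => (Fin.snoc p.2 p.1 : Fin (d + 1) → ℝ)) ⁻¹'
      unitCube (d + 1) = Set.Icc 0 1 ×ˢ unitCube d :=
    Set.ext fun p => snoc_mem_unitCube p.2 p.1
  rw [Measure.prod_restrict, ← hpre]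
  exact hvol.restrict_preimage_emb (measurableEmbedding_snoc d) _

variable {d : ℕ} {f : (Fin (d + 1) → ℝ) → ℝ}

lemma integrable_comp_snoc (hf : IntegrableOn f (unitCube (d + 1))) :
    Integrable (fun p : ℝ × (Fin d → ℝ) => f (Fin.snoc p.2 p.1))
      ((volume.restrict (Set.Icc 0 1)).prod (volume.restrict (unitCube d))) :=
  ((measurePreserving_snoc_unitCube d).integrable_comp_emb (measurableEmbedding_snoc d)).mpr hf

lemma haarFn_snoc (j : Fin d → ℕ) (k : ℕ) (m : Fin d → ℕ) (l : ℕ) (x : Fin d → ℝ) (t : ℝ) :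
    haarFn (d + 1) (fun i => (Fin.snoc j k : Fin (d + 1) → ℕ) i) (Fin.snoc m l) (Fin.snoc x t) =
      haarFn d (fun i => j i) m x * haar1 k l t := by
  simp only [haarFn, Fin.prod_univ_castSucc, Fin.snoc_castSucc, Fin.snoc_last]

lemma haarCoeff_snoc (hf : IntegrableOn f (unitCube (d + 1))) (j : Fin d → ℕ) (k : ℕ)
    (m : Fin d → ℕ) (l : ℕ) :
    haarCoeff (d + 1) f (fun i => (Fin.snoc j k : Fin (d + 1) → ℕ) i) (Fin.snoc m l) =
      ∫ t in Set.Icc (0 : ℝ) 1,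
        haarCoeff d (fun x => f (Fin.snoc x t)) (fun i => j i) m * haar1 k l t := by
  have hint := integrable_comp_snoc (integrableOn_mul_haarFn hf
    (fun i => (Fin.snoc j k : Fin (d + 1) → ℕ) i) (Fin.snoc m l))
  rw [haarCoeff, ← (measurePreserving_snoc_unitCube d).integral_comp (measurableEmbedding_snoc d),
    integral_prod _ hint]
  simp only [haarFn_snoc, haarCoeff, ← mul_assoc, integral_mul_const]

lemma integrableOn_haarCoeff_slice (hf : IntegrableOn f (unitCube (d + 1))) (j : Fin d → ℤ)
    (m : Fin d → ℕ) :
    IntegrableOn (fun t => haarCoeff d (fun x => f (Fin.snoc x t)) j m) (Set.Icc 0 1) :=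
  ((integrable_comp_snoc hf).mul_bdd
    ((measurable_haarFn j m).comp measurable_snd).aestronglyMeasurable
    (Filter.Eventually.of_forall fun p => abs_haarFn_le_one j m p.2)).integral_prod_left

lemma sum_Dfin0_snoc {M : Type*} [AddCommMonoid M] (j : Fin d → ℕ) (k : ℕ)
    (F : (Fin (d + 1) → ℕ) → M) :
    ∑ m ∈ Dfin0 (d + 1) (Fin.snoc j k), F m =
      ∑ m ∈ Dfin0 d j, ∑ l ∈ Finset.range (2 ^ k), F (Fin.snoc m l) := by
  rw [← Finset.sum_product']
  refine Finset.sum_bij' (fun m _ => (Fin.init m, m (Fin.last d))) (fun p _ => Fin.snoc p.1 p.2)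
    ?_ ?_ ?_ ?_ ?_ <;>
  simp [Dfin0, Fin.forall_fin_succ', Fin.init]

lemma dNormSq_succ (f : (Fin (d + 1) → ℝ) → ℝ) :
    dNormSq (d + 1) f = ∑' j : Fin d → ℕ, ∑ m ∈ Dfin0 d j, 2 ^ (∑ i, j i) *
      ∑' k : ℕ, ∑ l ∈ Finset.range (2 ^ k), 2 ^ k *
        ‖haarCoeff (d + 1) f (fun i => (Fin.snoc j k : Fin (d + 1) → ℕ) i)
          (Fin.snoc m l)‖ₑ ^ 2 := by
  have snocEquiv_eq (k : ℕ) (j : Fin d → ℕ) :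
      Fin.snocEquiv (fun _ => ℕ) (k, j) = (Fin.snoc j k : Fin (d + 1) → ℕ) := rfl
  rw [dNormSq_eq_tsum_enorm, ← (Fin.snocEquiv fun _ : Fin (d + 1) => ℕ).tsum_eq,
    ENNReal.tsum_prod', ENNReal.tsum_comm]
  refine tsum_congr fun j => ?_
  simp only [snocEquiv_eq, sum_Dfin0_snoc, Fin.sum_univ_castSucc (n := d), Fin.snoc_castSucc,
    Fin.snoc_last, pow_add, mul_assoc, ← Finset.mul_sum, ENNReal.tsum_mul_left]
  rw [← Summable.tsum_finsetSum fun _ _ => ENNReal.summable]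
  simp only [Finset.mul_sum]

theorem dNormSq_succ_le_lintegral_slice (hf : IntegrableOn f (unitCube (d + 1))) :
    dNormSq (d + 1) f ≤
      ∫⁻ t in Set.Icc (0 : ℝ) 1, dNormSq d fun x => f (Fin.snoc x t) := by
  have hmeas (j : Fin d → ℕ) (m : Fin d → ℕ) :
      AEMeasurable (fun t => (2 : ℝ≥0∞) ^ (∑ i, j i) *
        ‖haarCoeff d (fun x => f (Fin.snoc x t)) (fun i => j i) m‖ₑ ^ 2)
        (volume.restrict (Set.Icc 0 1)) :=
    ((integrableOn_haarCoeff_slice hf _ m).1.enorm.pow_const 2).const_mul _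
  simp only [dNormSq_eq_tsum_enorm d, dNormSq_succ, haarCoeff_snoc hf]
  rw [lintegral_tsum fun j => Finset.aemeasurable_fun_sum _ fun m _ => hmeas j m]
  gcongr with j
  rw [lintegral_finsetSum' _ fun m _ => hmeas j m]
  gcongr with m
  rw [lintegral_const_mul' _ _ (by simp)]
  gcongr
  exact tsum_enorm_integral_mul_haar1_sq_le Measure.restrict_le_self
    (integrableOn_haarCoeff_slice hf _ m)

theorem dNormSq_le_lintegral : ∀ {d : ℕ} {f : (Fin d → ℝ) → ℝ}, IntegrableOn f (unitCube d) →
    dNormSq d f ≤ ∫⁻ x in unitCube d, ‖f x‖ₑ ^ 2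
  | 0, f, hf => by
    have hbessel := enorm_integral_sq_le (hf.1 : AEStronglyMeasurable f _)
    simpa [dNormSq_eq_tsum_enorm, haarCoeff, haarFn, Dfin0, volume_unitCube] using hbessel
  | d + 1, f, hf => calc
      dNormSq (d + 1) f ≤ ∫⁻ t in Set.Icc (0 : ℝ) 1, dNormSq d fun x => f (Fin.snoc x t) :=
        dNormSq_succ_le_lintegral_slice hf
      _ ≤ ∫⁻ t in Set.Icc (0 : ℝ) 1, ∫⁻ x in unitCube d, ‖f (Fin.snoc x t)‖ₑ ^ 2 :=
        lintegral_mono_ae <| (integrable_comp_snoc hf).prod_right_ae.mono fun _ ht =>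
          dNormSq_le_lintegral ht
      _ = ∫⁻ x in unitCube (d + 1), ‖f x‖ₑ ^ 2 := by
        rw [← (measurePreserving_snoc_unitCube d).lintegral_comp_emb (measurableEmbedding_snoc d),
          lintegral_prod _ ((integrable_comp_snoc hf).1.enorm.pow_const 2)]

end Slices

section Discrepancy

lemma integrableOn_unitCube_prod (d : ℕ) : IntegrableOn (fun x => ∏ i, x i) (unitCube d) :=
  (continuous_finsetProd _ fun i _ => continuous_apply i).continuousOn.integrableOn_compact
    (isCompact_unitCube d)

lemma dNorm_prod_le_one (d : ℕ) : dNorm d (fun x => ∏ i, x i) ≤ 1 := by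
  have prod_le (x : Fin d → ℝ) (hx : x ∈ unitCube d) : ‖∏ i, x i‖ₑ ^ 2 ≤ 1 := by
    refine pow_le_one₀ zero_le ?_
    rw [Real.enorm_of_nonneg (Finset.prod_nonneg fun i _ => (hx i trivial).1),
      ENNReal.ofReal_le_one]
    exact Finset.prod_le_one (fun i _ => (hx i trivial).1) fun i _ => (hx i trivial).2
  rw [← ENNReal.pow_le_pow_left_iff two_ne_zero, dNorm_sq, one_pow]
  calc dNormSq d (fun x => ∏ i, x i) ≤ ∫⁻ x in unitCube d, ‖∏ i, x i‖ₑ ^ 2 :=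
        dNormSq_le_lintegral (integrableOn_unitCube_prod d)
    _ ≤ ∫⁻ _ in unitCube d, 1 :=
        setLIntegral_mono measurable_const prod_le
    _ = 1 := by simp [volume_unitCube]

lemma integrableOn_discSeq (d : ℕ) (S : ℕ → Fin d → ℝ) (N : ℕ) :
    IntegrableOn (discSeq d S N) (unitCube d) := by
  have card_eq_sum (x : Fin d → ℝ) : (Nat.card {k : Fin N // ∀ i, S k i < x i} : ℝ) =
      ∑ k : Fin N, (Set.univ.pi fun i => Set.Ioi (S k i)).indicator 1 x := by
    classical
    simp [Set.indicator_apply, Nat.card_eq_fintype_card, Fintype.card_subtype]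
  have : IsFiniteMeasure (volume.restrict (unitCube d)) := ⟨by simp [volume_unitCube]⟩
  refine Integrable.sub (Integrable.div_const ?_ _) (integrableOn_unitCube_prod d)
  simp only [card_eq_sum]
  exact integrable_finsetSum _ fun k _ => (integrable_const 1).indicator
    (MeasurableSet.univ_pi fun i => measurableSet_Ioi)

lemma natCast_mul_discSeq (d : ℕ) (S : ℕ → Fin d → ℝ) (n : ℕ) (x : Fin d → ℝ) :
    n * discSeq d S n x = Nat.card {k : Fin n // ∀ i, S k i < x i} - n * ∏ i, x i := by
  rcases eq_or_ne n 0 with rfl | hn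
  · simp
  · rw [discSeq, mul_sub, mul_div_cancel₀ _ (by exact_mod_cast hn)]

variable {d N : ℕ} {t : ℝ}

lemma card_snoc_div_lt (S : ℕ → Fin d → ℝ) (hN : N ≠ 0) (ht : t ≤ 1) (x : Fin d → ℝ) :
    Nat.card {k : Fin N // ∀ i, (Fin.snoc (S k) ((k : ℝ) / N) : Fin (d + 1) → ℝ) i <
      (Fin.snoc x t : Fin (d + 1) → ℝ) i} =
      Nat.card {k : Fin ⌈N * t⌉₊ // ∀ i, S k i < x i} := by
  have hNpos : (0 : ℝ) < N := by positivity
  have div_lt_iff_lt_ceil (k : ℕ) : (k : ℝ) / N < t ↔ k < ⌈N * t⌉₊ := by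
    rw [Nat.lt_ceil, div_lt_iff₀' hNpos]
  have hceil : ⌈N * t⌉₊ ≤ N := Nat.ceil_le.mpr (mul_le_of_le_one_right hNpos.le ht)
  simp only [Fin.forall_fin_succ', Fin.snoc_castSucc, Fin.snoc_last, div_lt_iff_lt_ceil]
  exact Nat.card_congr
    { toFun := fun k => ⟨⟨k.1, k.2.2⟩, k.2.1⟩
      invFun := fun k => ⟨⟨k.1, k.1.2.trans_le hceil⟩, k.2, k.1.2⟩
      left_inv := fun _ => rfl
      right_inv := fun _ => rfl }

lemma natCast_mul_discSeq_snoc (S : ℕ → Fin d → ℝ) (hN : N ≠ 0) (ht : t ≤ 1) (x : Fin d → ℝ) :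
    N * discSeq (d + 1) (fun k => Fin.snoc (S k) ((k : ℝ) / N)) N (Fin.snoc x t) =
      ⌈N * t⌉₊ * discSeq d S ⌈N * t⌉₊ x + (⌈N * t⌉₊ - N * t) * ∏ i, x i := by
  rw [natCast_mul_discSeq, natCast_mul_discSeq, card_snoc_div_lt S hN ht, Fin.prod_univ_castSucc]
  simp only [Fin.snoc_castSucc, Fin.snoc_last]
  ring

lemma dNorm_slice_discSeq_snoc_le (S : ℕ → Fin d → ℝ) (hN : N ≠ 0) (ht : t ∈ Set.Icc (0 : ℝ) 1) :
    dNorm d (fun x =>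
        N * discSeq (d + 1) (fun k => Fin.snoc (S k) ((k : ℝ) / N)) N (Fin.snoc x t)) ≤
      ⌈N * t⌉₊ * dNorm d (discSeq d S ⌈N * t⌉₊) + 1 := by
  have slice_eq : (fun x : Fin d → ℝ =>
      N * discSeq (d + 1) (fun k => Fin.snoc (S k) ((k : ℝ) / N)) N (Fin.snoc x t)) =
        (⌈N * t⌉₊ : ℝ) • discSeq d S ⌈N * t⌉₊ + (⌈N * t⌉₊ - N * t) • fun x => ∏ i, x i :=
    funext (natCast_mul_discSeq_snoc S hN ht.2)
  have rounding_le : ‖⌈N * t⌉₊ - N * t‖ₑ ≤ 1 := by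
    rw [Real.enorm_of_nonneg (sub_nonneg.mpr (Nat.le_ceil _)), ENNReal.ofReal_le_one]
    linarith [Nat.ceil_lt_add_one (mul_nonneg N.cast_nonneg ht.1 : 0 ≤ N * t)]
  rw [slice_eq]
  refine (dNorm_smul_add_smul_le (integrableOn_discSeq d S _) (integrableOn_unitCube_prod d)
    _ _).trans ?_
  rw [Real.enorm_natCast]
  gcongr
  exact mul_le_one' rounding_le (dNorm_prod_le_one d)

theorem natCast_mul_dNorm_discSeq_snoc_sq_le (S : ℕ → Fin d → ℝ) (hN : N ≠ 0) :
    (N * dNorm (d + 1) (discSeq (d + 1) (fun k => Fin.snoc (S k) ((k : ℝ) / N)) N)) ^ 2 ≤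
      ∫⁻ t in Set.Icc (0 : ℝ) 1, (⌈N * t⌉₊ * dNorm d (discSeq d S ⌈N * t⌉₊) + 1) ^ 2 := by
  set D := discSeq (d + 1) (fun k => Fin.snoc (S k) ((k : ℝ) / N)) N
  have hD : IntegrableOn ((N : ℝ) • D) (unitCube (d + 1)) := (integrableOn_discSeq _ _ _).smul _
  calc (N * dNorm (d + 1) D) ^ 2 = dNormSq (d + 1) ((N : ℝ) • D) := by
        rw [← dNorm_sq, dNorm_const_smul]; simp
    _ ≤ ∫⁻ t in Set.Icc (0 : ℝ) 1, dNormSq d fun x => N * D (Fin.snoc x t) :=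
        dNormSq_succ_le_lintegral_slice hD
    _ ≤ ∫⁻ t in Set.Icc (0 : ℝ) 1, (⌈N * t⌉₊ * dNorm d (discSeq d S ⌈N * t⌉₊) + 1) ^ 2 := by
        refine setLIntegral_mono' measurableSet_Icc fun t ht => ?_
        rw [← dNorm_sq]
        gcongr
        exact dNorm_slice_discSeq_snoc_le S hN ht

theorem proinov_transference_general (d : ℕ) (S : ℕ → Fin d → ℝ) (N : ℕ) (hN : 1 ≤ N) :
    ∃ n : ℕ, 1 ≤ n ∧ n ≤ N ∧
      (N : ℝ≥0∞) * dNorm (d + 1) (discSeq (d + 1)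
          (fun k => Fin.snoc (S k) ((k : ℝ) / (N : ℝ))) N) ≤
        (n : ℝ≥0∞) * dNorm d (discSeq d S n) + 1 := by
  obtain ⟨n, hn, n_max⟩ := Finset.exists_max_image (Finset.Icc 1 N)
    (fun n => (n : ℝ≥0∞) * dNorm d (discSeq d S n)) ⟨1, by simpa using hN⟩
  obtain ⟨one_le_n, n_le_N⟩ := Finset.mem_Icc.mp hn
  have ceil_le (t : ℝ) (ht : t ∈ Set.Icc (0 : ℝ) 1) :
      ⌈N * t⌉₊ * dNorm d (discSeq d S ⌈N * t⌉₊) ≤ n * dNorm d (discSeq d S n) := by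
    rcases Nat.eq_zero_or_pos ⌈N * t⌉₊ with h0 | hpos
    · simp [h0]
    · exact n_max _ (Finset.mem_Icc.mpr
        ⟨hpos, Nat.ceil_le.mpr (mul_le_of_le_one_right N.cast_nonneg ht.2)⟩)
  refine ⟨n, one_le_n, n_le_N, (ENNReal.pow_le_pow_left_iff two_ne_zero).mp ?_⟩
  calc _ ≤ ∫⁻ t in Set.Icc (0 : ℝ) 1, (⌈N * t⌉₊ * dNorm d (discSeq d S ⌈N * t⌉₊) + 1) ^ 2 :=
        natCast_mul_dNorm_discSeq_snoc_sq_le S (by omega)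
    _ ≤ ∫⁻ _ in Set.Icc (0 : ℝ) 1, (n * dNorm d (discSeq d S n) + 1) ^ 2 :=
        setLIntegral_mono measurable_const fun t ht => by grw [ceil_le t ht]
    _ = (n * dNorm d (discSeq d S n) + 1) ^ 2 := by simp

end Discrepancy

/-- Proinov-type transference: for every sequence `S` in `[0,1)^d` and
every `N`, there is `n ∈ {1,…,N}` with
`n‖D_S^n | 𝒟₀^d‖ + 1 ≥ N‖D_{P_{N,d+1}} | 𝒟₀^{d+1}‖`, where `P_{N,d+1}` consists of the
points `(y_k, k/N)`, `k = 0,…,N-1`. -/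
theorem proinov_transference (d : ℕ) (hd : 0 < d) (S : ℕ → Fin d → ℝ)
    (hS : ∀ k, S k ∈ unitCubeIco d) :
    ∀ N : ℕ, 1 ≤ N → ∃ n : ℕ, 1 ≤ n ∧ n ≤ N ∧
      (N : ℝ≥0∞) * dNorm (d+1) (discSeq (d+1)
          (fun k => Fin.snoc (S k) ((k:ℝ)/(N:ℝ))) N) ≤
        (n : ℝ≥0∞) * dNorm d (discSeq d S n) + 1 := by
  exact proinov_transference_general d S

end
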